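/- Tkachev's cubic cone: let n ≥ 1, and on ℝ^{2n+2} (coordinates x₁,y₁,…,x_{n+1},y_{n+1}) set T₁ = Σⱼ(xⱼ² − yⱼ²) and T₂ = Σⱼ 2xⱼyⱼ (sums over j = 1,…,n). The cubic polynomial Q = y_{n+1}·T₁ − x_{n+1}·T₂ satisfies ‖∇Q‖²·ΔQ − Δ_∞Q = 0 at every point of {Q = 0} where ∇Q ≠ 0; hence the cubic cone {y_{n+1}·T₁ = x_{n+1}·T₂} is a minimal hypersurface in ℝ^{2n+2}. -/

import Mathlib

/-!
Write `a = x_{n+1}`, `b = y_{n+1}`, so that `Q = b T₁ - a T₂`. Then `Q` is harmonic, because the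
second derivatives in `xⱼ` and `yⱼ` are `2b` and `-2b` and those in `a` and `b` vanish. Moreover
`Δ_∞Q` is half the derivative of `‖∇Q‖²` along `∇Q`. With `N = Σ_{j ≤ n} (xⱼ² + yⱼ²)` one has
`‖∇Q‖² = 4 (a² + b²) N + T₁² + T₂²`, and the derivatives along `∇Q` are
`a' = -T₂`, `b' = T₁`, `T₁' = 4bN`, `T₂' = -4aN`, `N' = 4Q`,
which gives `Δ_∞Q = 8 ‖z‖² Q`. Both `ΔQ` and `Δ_∞Q` therefore vanish on `{Q = 0}`.
-/

noncomputable section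

variable {ι : Type*} [Fintype ι] [DecidableEq ι]

/-- The `i`-th partial derivative `∂F/∂zᵢ` of `F : ℝ^ι → ℝ` at `x`. -/
def pd (F : EuclideanSpace ℝ ι → ℝ) (x : EuclideanSpace ℝ ι) (i : ι) : ℝ :=
  fderiv ℝ F x (EuclideanSpace.single i 1)

/-- The Laplacian `ΔF = Σᵢ ∂²F/∂zᵢ²` at `x`. -/
def lap (F : EuclideanSpace ℝ ι → ℝ) (x : EuclideanSpace ℝ ι) : ℝ :=
  ∑ i, fderiv ℝ (fun y => pd F y i) x (EuclideanSpace.single i 1)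

/-- The infinity-Laplacian `Δ_∞F = Σ_{i,j} (∂F/∂zᵢ)(∂F/∂zⱼ)(∂²F/∂zᵢ∂zⱼ)` at `x`. -/
def infLap (F : EuclideanSpace ℝ ι → ℝ) (x : EuclideanSpace ℝ ι) : ℝ :=
  ∑ i, ∑ j, pd F x i * pd F x j * fderiv ℝ (fun y => pd F y i) x (EuclideanSpace.single j 1)

/-- The squared norm `‖∇F‖²` of the gradient of `F` at `x`. -/
def gradSq (F : EuclideanSpace ℝ ι → ℝ) (x : EuclideanSpace ℝ ι) : ℝ :=
  ∑ i, (pd F x i) ^ 2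

/-- `T₁ = Σ_{j=1}^{n} (xⱼ² − yⱼ²)` on `ℝ^{2n+2}`, with `xⱼ = z (inl j)`, `yⱼ = z (inr j)`. -/
def T1 (n : ℕ) (z : EuclideanSpace ℝ (Fin (n + 1) ⊕ Fin (n + 1))) : ℝ :=
  ∑ j : Fin n, ((z (Sum.inl j.castSucc)) ^ 2 - (z (Sum.inr j.castSucc)) ^ 2)

/-- `T₂ = Σ_{j=1}^{n} 2xⱼyⱼ` on `ℝ^{2n+2}`. -/
def T2 (n : ℕ) (z : EuclideanSpace ℝ (Fin (n + 1) ⊕ Fin (n + 1))) : ℝ :=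
  ∑ j : Fin n, 2 * z (Sum.inl j.castSucc) * z (Sum.inr j.castSucc)

/-- Tkachev's cubic `Q = y_{n+1}·T₁ − x_{n+1}·T₂`. -/
def TkachevQ (n : ℕ) (z : EuclideanSpace ℝ (Fin (n + 1) ⊕ Fin (n + 1))) : ℝ :=
  z (Sum.inr (Fin.last n)) * T1 n z - z (Sum.inl (Fin.last n)) * T2 n z

section Gradient

theorem gradient_apply (F : EuclideanSpace ℝ ι → ℝ) (x : EuclideanSpace ℝ ι) (i : ι) :
    gradient F x i = pd F x i := by
  rw [pd, ← inner_gradient_left, EuclideanSpace.inner_single_right, one_mul, conj_trivial]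

theorem fderiv_apply_eq_sum_pd (F : EuclideanSpace ℝ ι → ℝ) (x v : EuclideanSpace ℝ ι) :
    fderiv ℝ F x v = ∑ i, v i * pd F x i := by
  conv_lhs => rw [← (EuclideanSpace.basisFun ι ℝ).sum_repr v]
  simp [pd]

variable {F : EuclideanSpace ℝ ι → ℝ} {x : EuclideanSpace ℝ ι}

theorem differentiableAt_pd (hF : ContDiffAt ℝ 2 F x) (i : ι) :
    DifferentiableAt ℝ (fun y => pd F y i) x := by
  have hF' : ContDiffAt ℝ 1 (fderiv ℝ F) x := hF.fderiv_right (by norm_num)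
  exact (hF'.differentiableAt one_ne_zero).clm_apply (differentiableAt_const _)

theorem fderiv_gradSq (hF : ContDiffAt ℝ 2 F x) (v : EuclideanSpace ℝ ι) :
    fderiv ℝ (gradSq F) x v = 2 * ∑ i, pd F x i * fderiv ℝ (fun y => pd F y i) x v := by
  have h : HasFDerivAt (gradSq F) _ x :=
    HasFDerivAt.fun_sum (u := Finset.univ) fun i _ => (differentiableAt_pd hF i).hasFDerivAt.pow 2
  simp [h.fderiv, Finset.mul_sum, mul_assoc]

theorem infLap_eq_fderiv_gradSq_gradient (hF : ContDiffAt ℝ 2 F x) :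
    infLap F x = fderiv ℝ (gradSq F) x (gradient F x) / 2 := by
  rw [fderiv_gradSq hF, mul_div_cancel_left₀ _ two_ne_zero, infLap]
  refine Finset.sum_congr rfl fun i _ => ?_
  rw [fderiv_apply_eq_sum_pd, Finset.mul_sum]
  refine Finset.sum_congr rfl fun j _ => ?_
  rw [gradient_apply, mul_assoc, ← pd]

end Gradient

section TkachevCubic

open Sum

/-- `N = Σ_{j=1}^{n} (xⱼ² + yⱼ²)` on `ℝ^{2n+2}`: the squared norm of `z` without its last
pair of coordinates. The derivatives of `T₁`, `T₂` and `N` along `∇Q` are polynomials in `N`, `Q`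
and that last pair. -/
def initNormSq (n : ℕ) (z : EuclideanSpace ℝ (Fin (n + 1) ⊕ Fin (n + 1))) : ℝ :=
  ∑ j : Fin n, (z (inl j.castSucc) ^ 2 + z (inr j.castSucc) ^ 2)

variable {n : ℕ} (z v : EuclideanSpace ℝ (Fin (n + 1) ⊕ Fin (n + 1))) (j : Fin n)

theorem norm_sq_eq_initNormSq_add :
    ‖z‖ ^ 2 = initNormSq n z + (z (inl (Fin.last n)) ^ 2 + z (inr (Fin.last n)) ^ 2) := by
  simp only [EuclideanSpace.real_norm_sq_eq, Fintype.sum_sum_type, Fin.sum_univ_castSucc,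
    initNormSq, Finset.sum_add_distrib]
  ring

theorem differentiable_T1 : Differentiable ℝ (T1 n) := by
  unfold T1; fun_prop

theorem differentiable_T2 : Differentiable ℝ (T2 n) := by
  unfold T2; fun_prop

theorem differentiable_initNormSq : Differentiable ℝ (initNormSq n) := by
  unfold initNormSq; fun_prop

theorem contDiff_TkachevQ {k : WithTop ℕ∞} : ContDiff ℝ k (TkachevQ n) := by
  unfold TkachevQ T1 T2; fun_prop

theorem fderiv_T1_apply :
    fderiv ℝ (T1 n) z v = ∑ j : Fin n,
      2 * (z (inl j.castSucc) * v (inl j.castSucc) - z (inr j.castSucc) * v (inr j.castSucc)) := by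
  have h : HasFDerivAt (T1 n) _ z := HasFDerivAt.fun_sum (u := Finset.univ) fun j _ =>
    ((PiLp.hasFDerivAt_apply (𝕜 := ℝ) 2 z (inl j.castSucc)).pow 2).sub
      ((PiLp.hasFDerivAt_apply (𝕜 := ℝ) 2 z (inr j.castSucc)).pow 2)
  simp [h.fderiv, mul_sub, mul_assoc]

theorem fderiv_T2_apply :
    fderiv ℝ (T2 n) z v = ∑ j : Fin n,
      2 * (z (inl j.castSucc) * v (inr j.castSucc) + z (inr j.castSucc) * v (inl j.castSucc)) := by
  have h : HasFDerivAt (T2 n) _ z := HasFDerivAt.fun_sum (u := Finset.univ) fun j _ =>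
    ((PiLp.hasFDerivAt_apply (𝕜 := ℝ) 2 z (inl j.castSucc)).const_mul 2).mul
      (PiLp.hasFDerivAt_apply (𝕜 := ℝ) 2 z (inr j.castSucc))
  simp [h.fderiv, mul_add, mul_assoc, mul_left_comm]

theorem fderiv_initNormSq_apply :
    fderiv ℝ (initNormSq n) z v = ∑ j : Fin n,
      2 * (z (inl j.castSucc) * v (inl j.castSucc) + z (inr j.castSucc) * v (inr j.castSucc)) := by
  have h : HasFDerivAt (initNormSq n) _ z := HasFDerivAt.fun_sum (u := Finset.univ) fun j _ =>
    ((PiLp.hasFDerivAt_apply (𝕜 := ℝ) 2 z (inl j.castSucc)).pow 2).add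
      ((PiLp.hasFDerivAt_apply (𝕜 := ℝ) 2 z (inr j.castSucc)).pow 2)
  simp [h.fderiv, mul_add, mul_assoc]

theorem fderiv_TkachevQ_apply :
    fderiv ℝ (TkachevQ n) z v =
      z (inr (Fin.last n)) * fderiv ℝ (T1 n) z v + T1 n z * v (inr (Fin.last n))
        - (z (inl (Fin.last n)) * fderiv ℝ (T2 n) z v + T2 n z * v (inl (Fin.last n))) := by
  have h : HasFDerivAt (TkachevQ n) _ z :=
    ((PiLp.hasFDerivAt_apply (𝕜 := ℝ) 2 z (inr (Fin.last n))).mul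
      (differentiable_T1 z).hasFDerivAt).sub
        ((PiLp.hasFDerivAt_apply (𝕜 := ℝ) 2 z (inl (Fin.last n))).mul
          (differentiable_T2 z).hasFDerivAt)
  simp [h.fderiv]

theorem pd_TkachevQ_inl_castSucc :
    pd (TkachevQ n) z (inl j.castSucc) =
      z (inr (Fin.last n)) * (2 * z (inl j.castSucc))
        - z (inl (Fin.last n)) * (2 * z (inr j.castSucc)) := by
  simp [pd, fderiv_TkachevQ_apply, fderiv_T1_apply, fderiv_T2_apply]

theorem pd_TkachevQ_inr_castSucc :
    pd (TkachevQ n) z (inr j.castSucc) =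
      -(z (inr (Fin.last n)) * (2 * z (inr j.castSucc)))
        - z (inl (Fin.last n)) * (2 * z (inl j.castSucc)) := by
  simp [pd, fderiv_TkachevQ_apply, fderiv_T1_apply, fderiv_T2_apply]

theorem pd_TkachevQ_inl_last : pd (TkachevQ n) z (inl (Fin.last n)) = -T2 n z := by
  simp [pd, fderiv_TkachevQ_apply, fderiv_T1_apply, fderiv_T2_apply]

theorem pd_TkachevQ_inr_last : pd (TkachevQ n) z (inr (Fin.last n)) = T1 n z := by
  simp [pd, fderiv_TkachevQ_apply, fderiv_T1_apply, fderiv_T2_apply]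

theorem pd_pd_TkachevQ_inl_castSucc :
    pd (fun w => pd (TkachevQ n) w (inl j.castSucc)) z (inl j.castSucc) =
      2 * z (inr (Fin.last n)) := by
  have h := ((PiLp.hasFDerivAt_apply (𝕜 := ℝ) 2 z (inr (Fin.last n))).fun_mul
    ((PiLp.hasFDerivAt_apply (𝕜 := ℝ) 2 z (inl j.castSucc)).const_mul 2)).fun_sub
      ((PiLp.hasFDerivAt_apply (𝕜 := ℝ) 2 z (inl (Fin.last n))).fun_mul
        ((PiLp.hasFDerivAt_apply (𝕜 := ℝ) 2 z (inr j.castSucc)).const_mul 2))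
  simp only [pd_TkachevQ_inl_castSucc]
  rw [pd, h.fderiv]
  simp [mul_comm]

theorem pd_pd_TkachevQ_inr_castSucc :
    pd (fun w => pd (TkachevQ n) w (inr j.castSucc)) z (inr j.castSucc) =
      -2 * z (inr (Fin.last n)) := by
  have h := ((PiLp.hasFDerivAt_apply (𝕜 := ℝ) 2 z (inr (Fin.last n))).fun_mul
    ((PiLp.hasFDerivAt_apply (𝕜 := ℝ) 2 z (inr j.castSucc)).const_mul 2)).fun_neg.fun_sub
      ((PiLp.hasFDerivAt_apply (𝕜 := ℝ) 2 z (inl (Fin.last n))).fun_mul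
        ((PiLp.hasFDerivAt_apply (𝕜 := ℝ) 2 z (inl j.castSucc)).const_mul 2))
  simp only [pd_TkachevQ_inr_castSucc]
  rw [pd, h.fderiv]
  simp [mul_comm]

theorem pd_pd_TkachevQ_inl_last :
    pd (fun w => pd (TkachevQ n) w (inl (Fin.last n))) z (inl (Fin.last n)) = 0 := by
  simp only [pd_TkachevQ_inl_last]
  simp [pd, fderiv_T2_apply]

theorem pd_pd_TkachevQ_inr_last :
    pd (fun w => pd (TkachevQ n) w (inr (Fin.last n))) z (inr (Fin.last n)) = 0 := by
  simp only [pd_TkachevQ_inr_last]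
  simp [pd, fderiv_T1_apply]

theorem lap_TkachevQ : lap (TkachevQ n) z = 0 := by
  change ∑ i, pd (fun w => pd (TkachevQ n) w i) z i = 0
  simp [Fintype.sum_sum_type, Fin.sum_univ_castSucc, pd_pd_TkachevQ_inl_castSucc,
    pd_pd_TkachevQ_inr_castSucc, pd_pd_TkachevQ_inl_last, pd_pd_TkachevQ_inr_last]

theorem fderiv_T1_gradient_TkachevQ :
    fderiv ℝ (T1 n) z (gradient (TkachevQ n) z) =
      4 * z (inr (Fin.last n)) * initNormSq n z := by
  simp only [fderiv_T1_apply, gradient_apply, pd_TkachevQ_inl_castSucc, pd_TkachevQ_inr_castSucc,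
    initNormSq, Finset.mul_sum]
  exact Finset.sum_congr rfl fun j _ => by ring

theorem fderiv_T2_gradient_TkachevQ :
    fderiv ℝ (T2 n) z (gradient (TkachevQ n) z) =
      -4 * z (inl (Fin.last n)) * initNormSq n z := by
  simp only [fderiv_T2_apply, gradient_apply, pd_TkachevQ_inl_castSucc, pd_TkachevQ_inr_castSucc,
    initNormSq, Finset.mul_sum]
  exact Finset.sum_congr rfl fun j _ => by ring

theorem fderiv_initNormSq_gradient_TkachevQ :
    fderiv ℝ (initNormSq n) z (gradient (TkachevQ n) z) = 4 * TkachevQ n z := by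
  simp only [fderiv_initNormSq_apply, gradient_apply, pd_TkachevQ_inl_castSucc,
    pd_TkachevQ_inr_castSucc, TkachevQ, T1, T2, Finset.mul_sum, ← Finset.sum_sub_distrib]
  exact Finset.sum_congr rfl fun j _ => by ring

theorem gradSq_TkachevQ :
    gradSq (TkachevQ n) z =
      4 * (z (inl (Fin.last n)) ^ 2 + z (inr (Fin.last n)) ^ 2) * initNormSq n z
        + T1 n z ^ 2 + T2 n z ^ 2 := by
  have hinit : ∑ j : Fin n, pd (TkachevQ n) z (inl j.castSucc) ^ 2
      + ∑ j : Fin n, pd (TkachevQ n) z (inr j.castSucc) ^ 2 =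
        4 * (z (inl (Fin.last n)) ^ 2 + z (inr (Fin.last n)) ^ 2) * initNormSq n z := by
    simp only [pd_TkachevQ_inl_castSucc, pd_TkachevQ_inr_castSucc, initNormSq, Finset.mul_sum,
      ← Finset.sum_add_distrib]
    exact Finset.sum_congr rfl fun j _ => by ring
  simp only [gradSq, Fintype.sum_sum_type, Fin.sum_univ_castSucc, pd_TkachevQ_inl_last,
    pd_TkachevQ_inr_last]
  linear_combination hinit

theorem fderiv_gradSq_TkachevQ_apply :
    fderiv ℝ (gradSq (TkachevQ n)) z v =
      8 * (z (inl (Fin.last n)) * v (inl (Fin.last n))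
          + z (inr (Fin.last n)) * v (inr (Fin.last n))) * initNormSq n z
        + 4 * (z (inl (Fin.last n)) ^ 2 + z (inr (Fin.last n)) ^ 2) * fderiv ℝ (initNormSq n) z v
        + 2 * T1 n z * fderiv ℝ (T1 n) z v + 2 * T2 n z * fderiv ℝ (T2 n) z v := by
  have hnorm := ((PiLp.hasFDerivAt_apply (𝕜 := ℝ) 2 z (inl (Fin.last n))).pow 2).add
    ((PiLp.hasFDerivAt_apply (𝕜 := ℝ) 2 z (inr (Fin.last n))).pow 2)
  have h : HasFDerivAt (gradSq (TkachevQ n)) _ z :=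
    ((((hnorm.const_mul 4).mul (differentiable_initNormSq z).hasFDerivAt).add
      ((differentiable_T1 z).hasFDerivAt.pow 2)).add
        ((differentiable_T2 z).hasFDerivAt.pow 2)).congr_of_eventuallyEq
          (.of_forall gradSq_TkachevQ)
  simp only [h.fderiv, Pi.add_apply, Nat.add_one_sub_one, pow_one, nsmul_eq_mul, Nat.cast_ofNat,
    smul_add, add_apply, smul_apply, smul_eq_mul, PiLp.proj_apply]
  ring

theorem infLap_TkachevQ : infLap (TkachevQ n) z = 8 * ‖z‖ ^ 2 * TkachevQ n z := by
  rw [infLap_eq_fderiv_gradSq_gradient contDiff_TkachevQ.contDiffAt, fderiv_gradSq_TkachevQ_apply,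
    fderiv_T1_gradient_TkachevQ, fderiv_T2_gradient_TkachevQ, fderiv_initNormSq_gradient_TkachevQ,
    gradient_apply, gradient_apply, pd_TkachevQ_inl_last, pd_TkachevQ_inr_last,
    norm_sq_eq_initNormSq_add, TkachevQ]
  ring

end TkachevCubic

/-- Tkachev's cubic cone: `Q = y_{n+1}·T₁ − x_{n+1}·T₂` satisfies
`‖∇Q‖²·ΔQ − Δ_∞Q = 0` at every point of `{Q = 0}` with `∇Q ≠ 0`; hence the cubic cone
`{y_{n+1}·T₁ = x_{n+1}·T₂}` is a minimal hypersurface in `ℝ^{2n+2}`. -/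
theorem tkachev_cubic_cone_minimal (n : ℕ) (hn : 1 ≤ n)
    (z : EuclideanSpace ℝ (Fin (n + 1) ⊕ Fin (n + 1)))
    (hz : TkachevQ n z = 0) (hgrad : ∃ i, pd (TkachevQ n) z i ≠ 0) :
    gradSq (TkachevQ n) z * lap (TkachevQ n) z - infLap (TkachevQ n) z = 0 := by
  rw [lap_TkachevQ, infLap_TkachevQ, hz, mul_zero, mul_zero, sub_zero]
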